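/- Let n ≥ 1, let A be an n×n real symmetric positive definite matrix, and let C be a set of n×n real symmetric positive definite matrices that is a cone, i.e. c·P ∈ C whenever P ∈ C and c > 0. Let S₁ be the set of minimisers of P ↦ D_LD(A,P) over C and S₂ the set of minimisers of P ↦ K(P⁻¹·A) over C. Then S₂ = { c·P : c > 0, P ∈ S₁ }, i.e. S₂ equals the conic hull of S₁. -/

import Mathlib

open Matrix

/-- Bregman log determinant divergence. -/
noncomputable def DLD {n : ℕ} (A P : Matrix (Fin n) (Fin n) ℝ) : ℝ :=
  (A * P⁻¹).trace - Real.log (A * P⁻¹).det - n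

/-- Kaporin's condition number. -/
noncomputable def Kap {n : ℕ} (M : Matrix (Fin n) (Fin n) ℝ) : ℝ :=
  (M.trace / n) ^ n / M.det

/-!
Along a ray, `c ↦ DLD A (c • P)` equals `c⁻¹ * t + n * log c` up to a constant, where
`t = trace (A * P⁻¹)`; it is smallest at `c = t / n`, and its value there is `log (Kap (P⁻¹ * A))`.
Thus `log ∘ Kap` is the minimum of the divergence along each ray, and it is constant on rays. For a
cone, minimising it amounts to choosing the rays that carry a minimiser of the divergence.
-/

theorem setOf_minimisers_eq_conicHull_of_min_on_rays {𝕜 E β : Type*} [Field 𝕜] [LinearOrder 𝕜]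
    [IsStrictOrderedRing 𝕜] [MulAction 𝕜 E] [Preorder β] {C : Set E} {f g : E → β}
    (hC : ∀ x ∈ C, ∀ c : 𝕜, 0 < c → c • x ∈ C)
    (hg : ∀ x ∈ C, ∀ c : 𝕜, 0 < c → g (c • x) = g x)
    (hgf : ∀ x ∈ C, g x ≤ f x)
    (hfg : ∀ x ∈ C, ∃ c : 𝕜, 0 < c ∧ f (c • x) = g x) :
    {x | x ∈ C ∧ ∀ y ∈ C, g x ≤ g y} =
      {z | ∃ c : 𝕜, 0 < c ∧ ∃ x ∈ {x | x ∈ C ∧ ∀ y ∈ C, f x ≤ f y}, z = c • x} := by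
  ext z
  constructor
  · rintro ⟨hz, hmin⟩
    obtain ⟨c, hc, hfc⟩ := hfg z hz
    have hmin' : ∀ y ∈ C, f (c • z) ≤ f y := fun y hy =>
      calc f (c • z) = g z := hfc
        _ ≤ g y := hmin y hy
        _ ≤ f y := hgf y hy
    exact ⟨c⁻¹, inv_pos.2 hc, c • z, ⟨hC z hz c hc, hmin'⟩, (inv_smul_smul₀ hc.ne' z).symm⟩
  · rintro ⟨c, hc, x, ⟨hx, hmin⟩, rfl⟩
    refine ⟨hC x hx c hc, fun y hy => ?_⟩
    obtain ⟨b, hb, hfb⟩ := hfg y hy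
    calc g (c • x) = g x := hg x hx c hc
      _ ≤ f x := hgf x hx
      _ ≤ f (b • y) := hmin _ (hC y hy b hb)
      _ = g y := hfb

section PosDef

variable {ι 𝕜 : Type*} [Fintype ι] [RCLike 𝕜]

open scoped ComplexOrder

open scoped MatrixOrder Matrix.Norms.L2Operator in
theorem exists_isUnit_eq_conjTranspose_mul_self_of_posDef [DecidableEq ι] {B : Matrix ι ι 𝕜}
    (hB : B.PosDef) : ∃ S : Matrix ι ι 𝕜, IsUnit S ∧ B = Sᴴ * S :=
  CStarAlgebra.isStrictlyPositive_iff_eq_star_mul_self.1 hB.isStrictlyPositive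

theorem trace_mul_pos_of_posDef [Nonempty ι] {A B : Matrix ι ι 𝕜} (hA : A.PosDef)
    (hB : B.PosDef) : 0 < (A * B).trace := by
  classical
  obtain ⟨S, hS, rfl⟩ := exists_isUnit_eq_conjTranspose_mul_self_of_posDef hB
  have hconj : (S * A * Sᴴ).PosDef :=
    hA.mul_mul_conjTranspose_same (vecMul_injective_of_isUnit hS)
  calc 0 < (S * A * Sᴴ).trace := hconj.trace_pos
    _ = (A * (Sᴴ * S)).trace := by rw [Matrix.mul_assoc, trace_mul_comm, Matrix.mul_assoc]

end PosDef

-- For singular `c • P` both sides are the junk value `0`.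
theorem inv_smul_eq_inv_smul_inv {ι K : Type*} [Fintype ι] [DecidableEq ι] [Field K] (c : K)
    (P : Matrix ι ι K) : (c • P)⁻¹ = c⁻¹ • P⁻¹ := by
  rcases eq_or_ne c 0 with rfl | hc
  · simp
  by_cases hP : IsUnit P.det
  · exact inv_smul' P (Units.mk0 c hc) hP
  · have hcP : ¬ IsUnit (c • P).det := by
      simpa [det_smul, hc] using hP
    rw [nonsing_inv_apply_not_isUnit _ hP, nonsing_inv_apply_not_isUnit _ hcP, smul_zero]

section Kaporin

variable {n : ℕ}

theorem natCast_pos_of_trace_ne_zero {M : Matrix (Fin n) (Fin n) ℝ} (ht : M.trace ≠ 0) :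
    (0 : ℝ) < n := by
  rcases n.eq_zero_or_pos with rfl | hn
  · exact absurd M.trace_fin_zero ht
  · exact_mod_cast hn

theorem Kap_mul_comm (M N : Matrix (Fin n) (Fin n) ℝ) : Kap (M * N) = Kap (N * M) := by
  rw [Kap, Kap, trace_mul_comm, det_mul_comm]

theorem Kap_smul {c : ℝ} (hc : c ≠ 0) (M : Matrix (Fin n) (Fin n) ℝ) : Kap (c • M) = Kap M := by
  rw [Kap, Kap, trace_smul, det_smul, Fintype.card_fin, smul_eq_mul, mul_div_assoc, mul_pow,
    mul_div_mul_left _ _ (pow_ne_zero n hc)]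

theorem Kap_inv_smul_mul {c : ℝ} (hc : c ≠ 0) (P A : Matrix (Fin n) (Fin n) ℝ) :
    Kap ((c • P)⁻¹ * A) = Kap (P⁻¹ * A) := by
  rw [inv_smul_eq_inv_smul_inv, smul_mul, Kap_smul (inv_ne_zero hc)]

theorem Kap_pos {M : Matrix (Fin n) (Fin n) ℝ} (ht : 0 < M.trace) (hd : 0 < M.det) :
    0 < Kap M :=
  div_pos (pow_pos (div_pos ht (natCast_pos_of_trace_ne_zero ht.ne')) n) hd

theorem log_Kap {M : Matrix (Fin n) (Fin n) ℝ} (ht : M.trace ≠ 0) (hd : M.det ≠ 0) :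
    Real.log (Kap M) = n * Real.log (M.trace / n) - Real.log M.det := by
  have hn := natCast_pos_of_trace_ne_zero ht
  rw [Kap, Real.log_div (pow_ne_zero n (div_ne_zero ht hn.ne')) hd, Real.log_pow]

theorem DLD_smul {c : ℝ} (hc : c ≠ 0) {A P : Matrix (Fin n) (Fin n) ℝ}
    (hd : (A * P⁻¹).det ≠ 0) :
    DLD A (c • P) =
      c⁻¹ * (A * P⁻¹).trace + n * Real.log c - Real.log (A * P⁻¹).det - n := by
  rw [DLD, inv_smul_eq_inv_smul_inv, Matrix.mul_smul, trace_smul, det_smul, Fintype.card_fin,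
    Real.log_mul (pow_ne_zero n (inv_ne_zero hc)) hd, Real.log_pow, Real.log_inv, smul_eq_mul]
  ring

theorem log_Kap_le_DLD {A P : Matrix (Fin n) (Fin n) ℝ} (ht : 0 < (A * P⁻¹).trace)
    (hd : (A * P⁻¹).det ≠ 0) : Real.log (Kap (P⁻¹ * A)) ≤ DLD A P := by
  have hn := natCast_pos_of_trace_ne_zero ht.ne'
  have hlog : n * Real.log ((A * P⁻¹).trace / n) ≤ (A * P⁻¹).trace - n :=
    calc n * Real.log ((A * P⁻¹).trace / n)
        ≤ n * ((A * P⁻¹).trace / n - 1) := by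
          gcongr
          exact Real.log_le_sub_one_of_pos (div_pos ht hn)
      _ = (A * P⁻¹).trace - n := by field_simp
  rw [Kap_mul_comm, log_Kap ht.ne' hd, DLD]
  linarith

theorem DLD_trace_div_smul {A P : Matrix (Fin n) (Fin n) ℝ} (ht : (A * P⁻¹).trace ≠ 0)
    (hd : (A * P⁻¹).det ≠ 0) :
    DLD A (((A * P⁻¹).trace / n) • P) = Real.log (Kap (P⁻¹ * A)) := by
  have hn := natCast_pos_of_trace_ne_zero ht
  rw [Kap_mul_comm, log_Kap ht hd, DLD_smul (div_ne_zero ht hn.ne') hd, inv_div,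
    div_mul_cancel₀ _ ht]
  ring

theorem stmt_16_general (A : Matrix (Fin n) (Fin n) ℝ) (C : Set (Matrix (Fin n) (Fin n) ℝ))
    (htrace : ∀ P ∈ C, 0 < (A * P⁻¹).trace) (hdet : ∀ P ∈ C, 0 < (A * P⁻¹).det)
    (hCcone : ∀ P ∈ C, ∀ c : ℝ, 0 < c → c • P ∈ C) :
    {P | P ∈ C ∧ ∀ R ∈ C, Kap (P⁻¹ * A) ≤ Kap (R⁻¹ * A)} =
      {M | ∃ c : ℝ, 0 < c ∧ ∃ P ∈ {P | P ∈ C ∧ ∀ R ∈ C, DLD A P ≤ DLD A R}, M = c • P} := by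
  have hKap : ∀ P ∈ C, 0 < Kap (P⁻¹ * A) := fun P hP => by
    rw [Kap_mul_comm]
    exact Kap_pos (htrace P hP) (hdet P hP)
  calc {P | P ∈ C ∧ ∀ R ∈ C, Kap (P⁻¹ * A) ≤ Kap (R⁻¹ * A)}
      = {P | P ∈ C ∧ ∀ R ∈ C, Real.log (Kap (P⁻¹ * A)) ≤ Real.log (Kap (R⁻¹ * A))} :=
        Set.ext fun P => and_congr_right fun hP => forall₂_congr fun R hR =>
          (Real.log_le_log_iff (hKap P hP) (hKap R hR)).symm
    _ = _ := setOf_minimisers_eq_conicHull_of_min_on_rays hCcone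
        (fun P _ c hc => by rw [Kap_inv_smul_mul hc.ne'])
        (fun P hP => log_Kap_le_DLD (htrace P hP) (hdet P hP).ne')
        (fun P hP => ⟨(A * P⁻¹).trace / n,
          div_pos (htrace P hP) (natCast_pos_of_trace_ne_zero (htrace P hP).ne'),
          DLD_trace_div_smul (htrace P hP).ne' (hdet P hP).ne'⟩)

end Kaporin

/-- the set of minimisers of Kaporin's condition number over a cone
equals the conic hull of the set of minimisers of the Bregman divergence. -/
theorem stmt_16 (n : ℕ) (hn : 1 ≤ n) (A : Matrix (Fin n) (Fin n) ℝ) (hA : A.PosDef)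
    (C : Set (Matrix (Fin n) (Fin n) ℝ))
    (hCpd : ∀ P ∈ C, P.PosDef)
    (hCcone : ∀ P ∈ C, ∀ c : ℝ, 0 < c → c • P ∈ C)
    (S₁ S₂ : Set (Matrix (Fin n) (Fin n) ℝ))
    (hS₁ : S₁ = {P | P ∈ C ∧ ∀ R ∈ C, DLD A P ≤ DLD A R})
    (hS₂ : S₂ = {P | P ∈ C ∧ ∀ R ∈ C, Kap (P⁻¹ * A) ≤ Kap (R⁻¹ * A)}) :
    S₂ = {M | ∃ c : ℝ, 0 < c ∧ ∃ P ∈ S₁, M = c • P} := by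
  have : Nonempty (Fin n) := ⟨⟨0, hn⟩⟩
  rw [hS₁, hS₂]
  exact stmt_16_general A C (fun P hP => trace_mul_pos_of_posDef hA (hCpd P hP).inv)
    (fun P hP => by rw [det_mul]; exact mul_pos hA.det_pos (hCpd P hP).inv.det_pos) hCcone
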